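/- Let n ≥ 1 and m ≥ 1 be natural numbers, c ∈ ℝⁿ, and let b₁, b₂, a₀, a₁ ∈ ℤⁿ satisfy a₀·b₁ = 1, a₀·b₂ = 0, and a₁·b₂ = 1 (dot products in ℤⁿ). Then the set { (1/(mk+1))·(a + c) : a ∈ ℤⁿ, k ≥ 1 an integer, gcd(a·b₁, a·b₂) = 1 } is dense in ℝⁿ. -/

import Mathlib

/-- Every pair of integers `x, y` admits a fixed translation `p, q` making all multiples of
`(x, y)` primitive. -/
lemma exists_forall_gcd_mul_add_eq_one (x y : ℤ) :
    ∃ p q : ℤ, ∀ l : ℤ, Int.gcd (l * x + p) (l * y + q) = 1 := by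
  obtain ⟨g, r, s, hrs, hx, hy⟩ : ∃ g r s : ℤ, IsCoprime r s ∧ x = g * r ∧ y = g * s := by
    by_cases h : Int.gcd x y = 0
    · rw [Int.gcd_eq_zero_iff] at h
      exact ⟨0, 1, 0, isCoprime_one_left, by simp [h.1], by simp [h.2]⟩
    · obtain ⟨r, s, hrs, hx, hy⟩ := Int.exists_gcd_one (Nat.pos_of_ne_zero h)
      exact ⟨Int.gcd x y, r, s, Int.isCoprime_iff_gcd_eq_one.2 hrs,
        by rw [mul_comm]; exact hx, by rw [mul_comm]; exact hy⟩
  obtain ⟨u, v, huv⟩ := hrs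
  refine ⟨-v, u, fun l => Int.isCoprime_iff_gcd_eq_one.1 ⟨-s, r, ?_⟩⟩
  subst hx hy
  linear_combination huv

/-- Integer truncations `⌊d y⌋ / d` converge to `y`. -/
lemma tendsto_floor_natCast_mul_div (y : ℝ) :
    Filter.Tendsto (fun d : ℕ => (d : ℝ)⁻¹ * (⌊(d : ℝ) * y⌋ : ℝ)) Filter.atTop (nhds y) := by
  have h : Filter.Tendsto (fun d : ℕ => y - (d : ℝ)⁻¹) Filter.atTop (nhds y) := by
    simpa using tendsto_const_nhds.sub (tendsto_inv_atTop_nhds_zero_nat (𝕜 := ℝ))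
  refine tendsto_of_tendsto_of_tendsto_of_le_of_le' h tendsto_const_nhds ?_ ?_ <;>
    filter_upwards [Filter.eventually_gt_atTop 0] with d hd
  all_goals
    have hd' : (0 : ℝ) < d := by exact_mod_cast hd
    have e : y = (d : ℝ)⁻¹ * (d * y) := by field_simp
  · calc y - (d : ℝ)⁻¹ = (d : ℝ)⁻¹ * (d * y - 1) := by field_simp
      _ ≤ _ := by gcongr; exact (Int.sub_one_lt_floor _).le
  · calc _ ≤ (d : ℝ)⁻¹ * (d * y) := by gcongr; exact Int.floor_le _
      _ = y := e.symm

/-- For `m, d > 0`, `(m j v + w) / (m d j + 1)` converges to `v / d` as `j → ∞`. -/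
lemma tendsto_inv_mul_add_one_mul {m d : ℝ} (hm : 0 < m) (hd : 0 < d) (v w : ℝ) :
    Filter.Tendsto (fun j : ℕ => (m * (d * j) + 1)⁻¹ * (m * j * v + w))
      Filter.atTop (nhds (d⁻¹ * v)) := by
  have h : Filter.Tendsto (fun j : ℕ => (m * (d * j) + 1)⁻¹) Filter.atTop (nhds 0) :=
    tendsto_inv_atTop_zero.comp <| Filter.tendsto_atTop_add_const_right _ _ <|
      (tendsto_natCast_atTop_atTop.const_mul_atTop hd).const_mul_atTop hm
  have h' := (h.mul_const (w - d⁻¹ * v)).const_add (d⁻¹ * v)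
  rw [zero_mul, add_zero] at h'
  refine h'.congr fun j => ?_
  have : m * (d * j) + 1 ≠ 0 := by positivity
  field_simp
  ring

/-- Refined density: if `a₀·b₁ = 1`, `a₀·b₂ = 0` and `a₁·b₂ = 1`, then the elements
`(1/(mk+1))·(a + c)` with `a ∈ ℤⁿ`, `k ≥ 1` and `gcd(a·b₁, a·b₂) = 1` are dense
in `ℝⁿ`. -/
theorem stmt10 (n m : ℕ) (hn : 1 ≤ n) (hm : 1 ≤ m) (c : Fin n → ℝ)
    (b₁ b₂ a₀ a₁ : Fin n → ℤ)
    (h₀₁ : ∑ i, a₀ i * b₁ i = 1) (h₀₂ : ∑ i, a₀ i * b₂ i = 0)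
    (h₁₂ : ∑ i, a₁ i * b₂ i = 1) :
    Dense {x : Fin n → ℝ | ∃ (a : Fin n → ℤ) (k : ℕ), 1 ≤ k ∧
      Int.gcd (∑ i, a i * b₁ i) (∑ i, a i * b₂ i) = 1 ∧
      x = ((m * k + 1 : ℝ))⁻¹ • ((fun i => (a i : ℝ)) + c)} := by
  intro y
  refine isClosed_closure.mem_of_tendsto (b := Filter.atTop)
    (f := fun (d : ℕ) i => (d : ℝ)⁻¹ * (⌊(d : ℝ) * y i⌋ : ℝ))
    (tendsto_pi_nhds.2 fun i => tendsto_floor_natCast_mul_div (y i)) ?_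
  filter_upwards [Filter.eventually_gt_atTop 0] with d hd
  generalize hv : (fun i => ⌊(d : ℝ) * y i⌋) = v
  simp only [funext_iff] at hv
  simp only [hv]
  obtain ⟨p, q, hpq⟩ := exists_forall_gcd_mul_add_eq_one (v ⬝ᵥ b₁) (v ⬝ᵥ b₂)
  change a₀ ⬝ᵥ b₁ = 1 at h₀₁
  change a₀ ⬝ᵥ b₂ = 0 at h₀₂
  change a₁ ⬝ᵥ b₂ = 1 at h₁₂
  obtain ⟨w, hw₁, hw₂⟩ : ∃ w : Fin n → ℤ, w ⬝ᵥ b₁ = p ∧ w ⬝ᵥ b₂ = q :=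
    ⟨(p - q * (a₁ ⬝ᵥ b₁)) • a₀ + q • a₁, by simp only [add_dotProduct, smul_dotProduct, smul_eq_mul, h₀₁]; ring,
      by simp only [add_dotProduct, smul_dotProduct, smul_eq_mul, h₀₂, h₁₂]; ring⟩
  refine mem_closure_of_tendsto (b := Filter.atTop)
    (f := fun (j : ℕ) i => ((m : ℝ) * (d * j) + 1)⁻¹ * (m * j * v i + (w i + c i)))
    (tendsto_pi_nhds.2 fun i => tendsto_inv_mul_add_one_mul (by exact_mod_cast hm)
      (by exact_mod_cast hd) _ _) ?_
  filter_upwards [Filter.eventually_gt_atTop 0] with j hj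
  refine ⟨(m * j : ℤ) • v + w, d * j, Nat.mul_pos hd hj, ?_, ?_⟩
  · change Int.gcd (((m * j : ℤ) • v + w) ⬝ᵥ b₁) (((m * j : ℤ) • v + w) ⬝ᵥ b₂) = 1
    simpa only [add_dotProduct, smul_dotProduct, hw₁, hw₂, smul_eq_mul] using hpq (m * j)
  · ext i
    simp [add_assoc]
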